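/- Assume each q_i is Lipschitz continuous and let f be the bounded fractal function. Define the Fourier-type transform f̂(s) = ∫_{x_0}^{x_N} e^{jsx} f(x) dx ∈ ℂ (j = √−1) and Q̂(s) = ∫_{x_0}^{x_N} e^{jsx} Q(x) dx, where Q(x) = q_i(L_i^{-1}(x)) for x ∈ I_i. Then for every real s, f̂(s) = ∑_{i=1}^N a_i α_i e^{j s b_i} f̂(a_i s) + Q̂(s). -/

import Mathlib

open Set

noncomputable def aC (x : ℕ → ℝ) (N i : ℕ) : ℝ := (x (i + 1) - x i) / (x N - x 0)

noncomputable def bC (x : ℕ → ℝ) (N i : ℕ) : ℝ := (x N * x i - x 0 * x (i + 1)) / (x N - x 0)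

/-- The affine map `L i t = a i * t + b i`. -/
noncomputable def Lm (x : ℕ → ℝ) (N i : ℕ) (t : ℝ) : ℝ := aC x N i * t + bC x N i

/-- The inverse `L i ⁻¹ t = (t - b i) / a i` of the affine map `L i`. -/
noncomputable def LmInv (x : ℕ → ℝ) (N i : ℕ) (t : ℝ) : ℝ := (t - bC x N i) / aC x N i

open MeasureTheory Filter Topology

lemma fr_mono (N : ℕ) (x : ℕ → ℝ) (hx : ∀ i, i < N → x i < x (i + 1)) :
    ∀ j, j ≤ N → ∀ i, i ≤ j → x i ≤ x j := by
  intro j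
  induction j with
  | zero => intro _ i hi; rw [Nat.le_zero.mp hi]
  | succ k ih =>
    intro hk i hi
    rcases Nat.lt_or_ge k i with h | h
    · have : i = k + 1 := by omega
      rw [this]
    · exact (ih (by omega) i h).trans (hx k (by omega)).le

lemma fr_cover (x : ℕ → ℝ) (t : ℝ) :
    ∀ k, t ∈ Ico (x 0) (x k) → ∃ i, i < k ∧ t ∈ Ico (x i) (x (i + 1)) := by
  intro k
  induction k with
  | zero => intro h; exact absurd (h.1.trans_lt h.2) (lt_irrefl _)
  | succ k ih =>
    intro h
    rcases lt_or_ge t (x k) with h1 | h1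
    · obtain ⟨i, hi, h2⟩ := ih ⟨h.1, h1⟩
      exact ⟨i, by omega, h2⟩
    · exact ⟨k, by omega, h1, h.2⟩

lemma fr_glue (N : ℕ) (x : ℕ → ℝ) (hx : ∀ i, i < N → x i < x (i + 1)) (g : ℕ → ℝ → ℝ)
    (hg : ∀ i, i < N → Measurable (g i)) :
    ∀ k, k ≤ N → ∃ h : ℝ → ℝ, Measurable h ∧
      ∀ i, i < k → ∀ t ∈ Ico (x i) (x (i + 1)), h t = g i t := by
  intro k
  induction k with
  | zero => intro _; exact ⟨0, measurable_const, fun i hi => absurd hi (by omega)⟩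
  | succ k ih =>
    intro hk
    obtain ⟨h, hm, hh⟩ := ih (by omega)
    refine ⟨fun t => if t < x k then h t else g k t,
      Measurable.ite measurableSet_Iio hm (hg k (by omega)), ?_⟩
    intro i hi t ht
    rcases Nat.lt_or_ge i k with h1 | h1
    · have : t < x k := ht.2.trans_le (fr_mono N x hx k (by omega) (i + 1) h1)
      simp only [this, if_true]
      exact hh i h1 t ht
    · have : i = k := by omega
      subst this
      simp only [not_lt.mpr ht.1, if_false]

lemma fr_bound (N : ℕ) (α : ℕ → ℝ) (hα : ∀ i, i < N → |α i| < 1) :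
    ∃ c : ℝ, 0 ≤ c ∧ c < 1 ∧ ∀ i, i < N → |α i| ≤ c := by
  induction N with
  | zero => exact ⟨0, le_rfl, one_pos, fun i hi => absurd hi (by omega)⟩
  | succ k ih =>
    obtain ⟨c, h0, h1, h2⟩ := ih (fun i hi => hα i (by omega))
    refine ⟨max c |α k|, le_max_of_le_left h0, max_lt h1 (hα k (by omega)), fun i hi => ?_⟩
    rcases Nat.lt_or_ge i k with h | h
    · exact le_max_of_le_left (h2 i h)
    · have : i = k := by omega
      subst this
      exact le_max_right _ _

lemma fr_aC_pos (N : ℕ) (x : ℕ → ℝ) (h0 : x 0 < x N) (i : ℕ) (hi : x i < x (i + 1)) :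
    0 < aC x N i := div_pos (sub_pos.mpr hi) (sub_pos.mpr h0)

lemma fr_Lm0 (N : ℕ) (x : ℕ → ℝ) (h0 : x 0 < x N) (i : ℕ) :
    aC x N i * x 0 + bC x N i = x i := by
  have : x N - x 0 ≠ 0 := (sub_pos.mpr h0).ne'
  unfold aC bC
  field_simp
  ring

lemma fr_LmN (N : ℕ) (x : ℕ → ℝ) (h0 : x 0 < x N) (i : ℕ) :
    aC x N i * x N + bC x N i = x (i + 1) := by
  have : x N - x 0 ≠ 0 := (sub_pos.mpr h0).ne'
  unfold aC bC
  field_simp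
  ring

lemma fr_Lm_inv (N : ℕ) (x : ℕ → ℝ) (i : ℕ) (ha : 0 < aC x N i) (t : ℝ) :
    Lm x N i (LmInv x N i t) = t := by
  unfold Lm LmInv
  field_simp
  ring

lemma fr_inv_Lm (N : ℕ) (x : ℕ → ℝ) (i : ℕ) (ha : 0 < aC x N i) (t : ℝ) :
    LmInv x N i (aC x N i * t + bC x N i) = t := by
  unfold LmInv
  field_simp
  ring

lemma fr_inv_Ico (N : ℕ) (x : ℕ → ℝ) (h0 : x 0 < x N) (i : ℕ) (hi : x i < x (i + 1)) (t : ℝ)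
    (ht : t ∈ Ico (x i) (x (i + 1))) : LmInv x N i t ∈ Ico (x 0) (x N) := by
  have ha := fr_aC_pos N x h0 i hi
  have e0 := fr_Lm0 N x h0 i
  have e1 := fr_LmN N x h0 i
  unfold LmInv
  constructor
  · rw [le_div_iff₀ ha]; linarith [ht.1]
  · rw [div_lt_iff₀ ha]; linarith [ht.2]

lemma fr_inv_Icc (N : ℕ) (x : ℕ → ℝ) (h0 : x 0 < x N) (i : ℕ) (hi : x i < x (i + 1)) (t : ℝ)
    (ht : t ∈ Icc (x i) (x (i + 1))) : LmInv x N i t ∈ Icc (x 0) (x N) := by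
  have ha := fr_aC_pos N x h0 i hi
  have e0 := fr_Lm0 N x h0 i
  have e1 := fr_LmN N x h0 i
  unfold LmInv
  constructor
  · rw [le_div_iff₀ ha]; linarith [ht.1]
  · rw [div_le_iff₀ ha]; linarith [ht.2]

lemma fr_inv_cont (N : ℕ) (x : ℕ → ℝ) (i : ℕ) : Continuous (LmInv x N i) := by
  unfold LmInv
  fun_prop

lemma fr_q_cont (a b : ℝ) (q : ℝ → ℝ)
    (hq : ∃ C, ∀ u ∈ Icc a b, ∀ v ∈ Icc a b, |q u - q v| ≤ C * |u - v|) :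
    ContinuousOn q (Icc a b) := by
  obtain ⟨C, hC⟩ := hq
  have : LipschitzOnWith (Real.toNNReal C) q (Icc a b) := by
    apply LipschitzOnWith.of_dist_le_mul
    intro u hu v hv
    rw [Real.dist_eq, Real.dist_eq]
    exact (hC u hu v hv).trans
      (mul_le_mul_of_nonneg_right (Real.le_coe_toNNReal C) (abs_nonneg _))
  exact this.continuousOn

lemma fr_approx (N : ℕ) (x : ℕ → ℝ) (hx : ∀ i, i < N → x i < x (i + 1)) (h0 : x 0 < x N)
    (α : ℕ → ℝ) (c : ℝ) (hc0 : 0 ≤ c) (hc : ∀ i, i < N → |α i| ≤ c) (q : ℕ → ℝ → ℝ)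
    (hq : ∀ i, i < N → ContinuousOn (q i) (Icc (x 0) (x N)))
    (f : ℝ → ℝ) (M : ℝ) (hM : ∀ t ∈ Icc (x 0) (x N), |f t| ≤ M)
    (hfe : ∀ i, i < N → ∀ t ∈ Ico (x 0) (x N), f (Lm x N i t) = α i * f t + q i t) :
    ∀ n : ℕ, ∃ h : ℝ → ℝ, Measurable h ∧ ∀ t ∈ Ico (x 0) (x N), |f t - h t| ≤ c ^ n * M := by
  classical
  intro n
  induction n with
  | zero =>
    exact ⟨fun _ => 0, measurable_const, fun t ht => by
      simpa using hM t (Ico_subset_Icc_self ht)⟩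
  | succ n ih =>
    obtain ⟨h, hm, hh⟩ := ih
    obtain ⟨h', hm', hh'⟩ := fr_glue N x hx
      (fun i t => α i * h (LmInv x N i t) +
        (Icc (x 0) (x N)).piecewise (q i) (fun _ => 0) (LmInv x N i t))
      (fun i hi => by
        have m1 : Measurable (LmInv x N i) := (fr_inv_cont N x i).measurable
        have m2 : Measurable ((Icc (x 0) (x N)).piecewise (q i) (fun _ => (0:ℝ))) :=
          (hq i hi).measurable_piecewise continuousOn_const measurableSet_Icc
        exact ((hm.comp m1).const_mul _).add (m2.comp m1)) N le_rfl
    refine ⟨h', hm', fun t ht => ?_⟩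
    obtain ⟨i, hi, hti⟩ := fr_cover x t N ht
    have hu := fr_inv_Ico N x h0 i (hx i hi) t hti
    have hf := hfe i hi _ hu
    rw [fr_Lm_inv N x i (fr_aC_pos N x h0 i (hx i hi))] at hf
    rw [hh' i hi t hti, hf, Set.piecewise_eq_of_mem _ _ _ (Ico_subset_Icc_self hu)]
    have : α i * f (LmInv x N i t) + q i (LmInv x N i t) -
        (α i * h (LmInv x N i t) + q i (LmInv x N i t)) =
        α i * (f (LmInv x N i t) - h (LmInv x N i t)) := by ring
    rw [this, abs_mul, pow_succ', mul_assoc]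
    exact mul_le_mul (hc i hi) (hh _ hu) (abs_nonneg _) hc0

lemma fr_integrable (N : ℕ) (x : ℕ → ℝ) (hx : ∀ i, i < N → x i < x (i + 1)) (h0 : x 0 < x N)
    (α : ℕ → ℝ) (hα : ∀ i, i < N → |α i| < 1) (q : ℕ → ℝ → ℝ)
    (hq : ∀ i, i < N → ContinuousOn (q i) (Icc (x 0) (x N)))
    (f : ℝ → ℝ) (hfb : ∃ M, ∀ t ∈ Icc (x 0) (x N), |f t| ≤ M)
    (hfe : ∀ i, i < N → ∀ t ∈ Ico (x 0) (x N), f (Lm x N i t) = α i * f t + q i t) :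
    IntegrableOn f (Ico (x 0) (x N)) := by
  obtain ⟨M, hM⟩ := hfb
  obtain ⟨c, hc0, hc1, hc⟩ := fr_bound N α hα
  choose h hm hh using fr_approx N x hx h0 α c hc0 hc q hq f M hM hfe
  have key : AEStronglyMeasurable f (volume.restrict (Ico (x 0) (x N))) := by
    refine aestronglyMeasurable_of_tendsto_ae (u := atTop) (f := h)
      (fun n => (hm n).aestronglyMeasurable) ?_
    filter_upwards [ae_restrict_mem measurableSet_Ico] with t ht
    rw [tendsto_iff_dist_tendsto_zero]
    have hl : Tendsto (fun n : ℕ => c ^ n * M) atTop (𝓝 0) := by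
      simpa using (tendsto_pow_atTop_nhds_zero_of_lt_one hc0 hc1).mul_const M
    refine squeeze_zero (fun n => dist_nonneg) (fun n => ?_) hl
    rw [dist_comm, Real.dist_eq]
    exact hh n t ht
  refine ⟨key, HasFiniteIntegral.restrict_of_bounded (C := M) (by simp) ?_⟩
  filter_upwards [ae_restrict_mem measurableSet_Ico] with t ht
  exact hM t (Ico_subset_Icc_self ht)

lemma fr_piece (N : ℕ) (x : ℕ → ℝ) (h0 : x 0 < x N) (i : ℕ) (hi : x i < x (i + 1))
    (hsub : Icc (x i) (x (i + 1)) ⊆ Icc (x 0) (x N))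
    (α : ℝ) (q : ℝ → ℝ) (hq : ContinuousOn q (Icc (x 0) (x N)))
    (f : ℝ → ℝ) (hf : IntegrableOn f (Ico (x 0) (x N)))
    (hfe : ∀ t ∈ Ico (x 0) (x N), f (Lm x N i t) = α * f t + q t)
    (Qf : ℝ → ℝ) (hQf : ∀ t ∈ Ico (x i) (x (i + 1)), Qf t = q (LmInv x N i t)) (s : ℝ) :
    IntervalIntegrable (fun t => Complex.exp (((s * t : ℝ) : ℂ) * Complex.I) * ((f t : ℝ) : ℂ))
      volume (x i) (x (i + 1)) ∧
    IntervalIntegrable (fun t => Complex.exp (((s * t : ℝ) : ℂ) * Complex.I) * ((Qf t : ℝ) : ℂ))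
      volume (x i) (x (i + 1)) ∧
    ∫ t in (x i)..(x (i + 1)), Complex.exp (((s * t : ℝ) : ℂ) * Complex.I) * ((f t : ℝ) : ℂ) =
      ((aC x N i : ℝ) : ℂ) * (α : ℂ) * Complex.exp (((s * bC x N i : ℝ) : ℂ) * Complex.I) *
        (∫ t in (x 0)..(x N),
              Complex.exp (((aC x N i * s * t : ℝ) : ℂ) * Complex.I) * ((f t : ℝ) : ℂ)) +
      ∫ t in (x i)..(x (i + 1)),
        Complex.exp (((s * t : ℝ) : ℂ) * Complex.I) * ((Qf t : ℝ) : ℂ) := by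
  have ha := fr_aC_pos N x h0 i hi
  have hexp : Continuous (fun t : ℝ => Complex.exp (((s * t : ℝ) : ℂ) * Complex.I)) := by
    fun_prop
  have hfR : IntervalIntegrable f volume (x 0) (x N) :=
    (intervalIntegrable_iff_integrableOn_Ico_of_le h0.le).mpr hf
  have hfR' : IntervalIntegrable f volume (x i) (x (i + 1)) := by
    apply hfR.mono_set
    rw [uIcc_of_le hi.le, uIcc_of_le h0.le]
    exact hsub
  have hfI : IntervalIntegrable
      (fun t => Complex.exp (((s * t : ℝ) : ℂ) * Complex.I) * ((f t : ℝ) : ℂ))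
      volume (x i) (x (i + 1)) :=
    IntervalIntegrable.continuousOn_mul
      (f := fun t => ((f t : ℝ) : ℂ)) ⟨hfR'.1.ofReal, hfR'.2.ofReal⟩ hexp.continuousOn
  have hqc : ContinuousOn (fun t => q (LmInv x N i t)) (Icc (x i) (x (i + 1))) :=
    hq.comp (fr_inv_cont N x i).continuousOn (fun t ht => fr_inv_Icc N x h0 i hi t ht)
  have hqI : IntervalIntegrable (fun t => Complex.exp (((s * t : ℝ) : ℂ) * Complex.I) *
      ((q (LmInv x N i t) : ℝ) : ℂ)) volume (x i) (x (i + 1)) := by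
    apply ContinuousOn.intervalIntegrable
    rw [uIcc_of_le hi.le]
    exact hexp.continuousOn.mul (Complex.continuous_ofReal.comp_continuousOn hqc)
  have hQe : ∀ t ∈ Ioo (x i) (x (i + 1)),
      Complex.exp (((s * t : ℝ) : ℂ) * Complex.I) * ((q (LmInv x N i t) : ℝ) : ℂ) =
      Complex.exp (((s * t : ℝ) : ℂ) * Complex.I) * ((Qf t : ℝ) : ℂ) := by
    intro t ht
    rw [hQf t (Ioo_subset_Ico_self ht)]
  have hQI : IntervalIntegrable
      (fun t => Complex.exp (((s * t : ℝ) : ℂ) * Complex.I) * ((Qf t : ℝ) : ℂ))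
      volume (x i) (x (i + 1)) := by
    rw [intervalIntegrable_iff_integrableOn_Ioo_of_le hi.le] at hqI ⊢
    exact hqI.congr_fun hQe measurableSet_Ioo
  refine ⟨hfI, hQI, ?_⟩
  rw [← sub_eq_iff_eq_add, ← intervalIntegral.integral_sub hfI hQI]
  have hG : ∫ t in (x i)..(x (i + 1)),
      (Complex.exp (((s * t : ℝ) : ℂ) * Complex.I) * ((f t : ℝ) : ℂ) -
        Complex.exp (((s * t : ℝ) : ℂ) * Complex.I) * ((Qf t : ℝ) : ℂ)) =
      ∫ t in (x i)..(x (i + 1)), Complex.exp (((s * t : ℝ) : ℂ) * Complex.I) *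
        ((α : ℂ) * ((f (LmInv x N i t) : ℝ) : ℂ)) := by
    rw [intervalIntegral.integral_of_le hi.le, intervalIntegral.integral_of_le hi.le,
      integral_Ioc_eq_integral_Ioo, integral_Ioc_eq_integral_Ioo]
    refine setIntegral_congr_fun measurableSet_Ioo (fun t ht => ?_)
    have ht' := Ioo_subset_Ico_self ht
    have hu := fr_inv_Ico N x h0 i hi t ht'
    have h1 := hfe _ hu
    rw [fr_Lm_inv N x i ha] at h1
    simp only [hQf t ht', h1]
    push_cast
    ring
  rw [hG]
  have hsubst := intervalIntegral.integral_comp_mul_add (a := x 0) (b := x N)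
    (fun t => Complex.exp (((s * t : ℝ) : ℂ) * Complex.I) *
        ((α : ℂ) * ((f (LmInv x N i t) : ℝ) : ℂ))) ha.ne' (bC x N i)
  rw [fr_Lm0 N x h0, fr_LmN N x h0, eq_inv_smul_iff₀ ha.ne'] at hsubst
  rw [← hsubst, Complex.real_smul, mul_assoc, mul_assoc]
  congr 1
  rw [← intervalIntegral.integral_const_mul, ← intervalIntegral.integral_const_mul]
  refine intervalIntegral.integral_congr (fun t _ => ?_)
  simp only [fr_inv_Lm N x i ha]
  have : Complex.exp (((s * (aC x N i * t + bC x N i) : ℝ) : ℂ) * Complex.I) =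
      Complex.exp (((s * bC x N i : ℝ) : ℂ) * Complex.I) *
        Complex.exp (((aC x N i * s * t : ℝ) : ℂ) * Complex.I) := by
    rw [← Complex.exp_add]
    congr 1
    push_cast
    ring
  rw [this]
  ring

/-- Functional equation for the Fourier-type transform of the bounded fractal function:
`f̂(s) = ∑ i a i α i e^{j s b i} f̂(a i s) + Q̂(s)`. -/
theorem stmt16
    (N : ℕ) (hN : 2 ≤ N)
    (x : ℕ → ℝ)
    (hx : ∀ i, i < N → x i < x (i + 1))
    (α : ℕ → ℝ) (hα : ∀ i, i < N → |α i| < 1)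
    (q : ℕ → ℝ → ℝ)
    (hq : ∀ i, i < N → ∃ C, ∀ u ∈ Icc (x 0) (x N), ∀ v ∈ Icc (x 0) (x N),
      |q i u - q i v| ≤ C * |u - v|)
    (f : ℝ → ℝ)
    (hfb : ∃ M, ∀ t ∈ Icc (x 0) (x N), |f t| ≤ M)
    (hfe : ∀ i, i < N → ∀ t ∈ Ico (x 0) (x N), f (Lm x N i t) = α i * f t + q i t)
    (hfeN : f (Lm x N (N - 1) (x N)) = α (N - 1) * f (x N) + q (N - 1) (x N))
    (Qf : ℝ → ℝ)
    (hQf : ∀ i, i < N → ∀ t ∈ Ico (x i) (x (i + 1)), Qf t = q i (LmInv x N i t))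
    (hQfN : Qf (x N) = q (N - 1) (LmInv x N (N - 1) (x N))) :
    ∀ s : ℝ,
      ∫ t in (x 0)..(x N), Complex.exp (((s * t : ℝ) : ℂ) * Complex.I) * ((f t : ℝ) : ℂ) =
        (∑ i ∈ Finset.range N,
          ((aC x N i : ℝ) : ℂ) * ((α i : ℝ) : ℂ) *
            Complex.exp (((s * bC x N i : ℝ) : ℂ) * Complex.I) *
            ∫ t in (x 0)..(x N),
              Complex.exp (((aC x N i * s * t : ℝ) : ℂ) * Complex.I) * ((f t : ℝ) : ℂ)) +
        ∫ t in (x 0)..(x N), Complex.exp (((s * t : ℝ) : ℂ) * Complex.I) * ((Qf t : ℝ) : ℂ) := by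
  intro s
  have hmono := fr_mono N x hx
  have h0 : x 0 < x N := (hx 0 (by omega)).trans_le (hmono N le_rfl 1 (by omega))
  have hqc : ∀ i, i < N → ContinuousOn (q i) (Icc (x 0) (x N)) :=
    fun i hi => fr_q_cont _ _ _ (hq i hi)
  have hf := fr_integrable N x hx h0 α hα q hqc f hfb hfe
  have P := fun i (hi : i < N) => fr_piece N x h0 i (hx i hi)
    (Icc_subset_Icc (hmono i hi.le 0 (Nat.zero_le _)) (hmono N le_rfl (i + 1) hi))
    (α i) (q i) (hqc i hi) f hf (hfe i hi) Qf (hQf i hi) s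
  rw [← intervalIntegral.sum_integral_adjacent_intervals (fun i hi => (P i hi).1),
    ← intervalIntegral.sum_integral_adjacent_intervals (fun i hi => (P i hi).2.1),
    ← Finset.sum_add_distrib]
  exact Finset.sum_congr rfl (fun i hi => (P i (Finset.mem_range.mp hi)).2.2)
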